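/- arXiv:1708.06640 — 6 statements merged into one kernel-verified Lean document; each statement's English description precedes it below -/
import Mathlib

section
/- Let K be a commutative ring, n and k natural numbers with k ≤ n, and let S, T, U, V be subsets of {1,…,n} each of size k. Let j = |S ∩ V|. If |S ∩ V| = |T ∩ U| and |S ∩ V| ≥ k−1, then ∑_{P ∈ 𝒫_n} [P]_{S,T}·[P^{-1}]_{U,V} = j!·(n−2k+j)!·(−1)^{s(T,U)+s(S,V)} (where the factorials are natural numbers cast into K and −1 is the negation of the multiplicative identity of K); otherwise ∑_{P ∈ 𝒫_n} [P]_{S,T}·[P^{-1}]_{U,V} = 0. -/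
/-- `[A]_{S,T}`: the determinant of the submatrix of `A` with rows indexed by `S` and
columns indexed by `T`, both taken in increasing order. -/
def minorDet {K : Type} [CommRing K] {m p : ℕ} (A : Matrix (Fin m) (Fin p) K)
    (S : Finset (Fin m)) (T : Finset (Fin p)) : K :=
  if h : T.card = S.card then (A.submatrix (S.orderEmbOfFin rfl) (T.orderEmbOfFin h)).det else 0

/-- `r(t, X)`: the number of elements of `X` that are less than `t`. -/
def rless {n : ℕ} (t : Fin n) (X : Finset (Fin n)) : ℕ := (X.filter (fun x => x < t)).card

/-- `s(X, Y) = ∑_{t ∈ X ∖ Y} r(t,X) − ∑_{t ∈ Y ∖ X} r(t,Y)`. -/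
def sSign {n : ℕ} (X Y : Finset (Fin n)) : ℤ :=
  (∑ t ∈ X \ Y, (rless t X : ℤ)) - ∑ t ∈ Y \ X, (rless t Y : ℤ)


/-! A minor `[P]_{S,T}` of the permutation matrix of `π` vanishes unless `π` maps `S` onto `T`, so
only permutations with `π S = T` and `π V = U` contribute. If `S ∖ V` contains two distinct elements
`a` and `b`, then `π ↦ π ∘ (a b)` exchanges two rows of the first minor and does not change the
second, so the terms cancel in pairs; inversion of `π` gives the same for `V ∖ S`. Otherwise `S` and
`V` each exceed `S ∩ V` by at most one element: expanding both minors along that row reduces them to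
the minors on `S ∩ V` and `T ∩ U`, which are mutually inverse, and the signs of the two expansions
do not depend on `π`. The number of contributing permutations is the order of the stabilizer of the
partition of `{1,…,n}` by membership in `S` and in `V`. -/

open Finset Equiv
open scoped Nat

section OrderEmbOfFin

variable {α : Type*} [LinearOrder α] {k : ℕ} {S : Finset α}

theorem exists_orderEmbOfFin_eq (hS : #S = k) {a : α} (ha : a ∈ S) :
    ∃ i, S.orderEmbOfFin hS i = a := by
  rwa [← Set.mem_range, range_orderEmbOfFin, mem_coe]

theorem orderEmbOfFin_erase_orderEmbOfFin (hS : #S = k + 1) (i : Fin (k + 1))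
    (herase : #(S.erase (S.orderEmbOfFin hS i)) = k) :
    (S.erase (S.orderEmbOfFin hS i)).orderEmbOfFin herase = S.orderEmbOfFin hS ∘ i.succAbove := by
  refine (orderEmbOfFin_unique herase (fun x => ?_)
    ((S.orderEmbOfFin hS).strictMono.comp (Fin.strictMono_succAbove i))).symm
  simp [Fin.succAbove_ne]

theorem rless_orderEmbOfFin {n : ℕ} {X : Finset (Fin n)} (hX : #X = k) (i : Fin k) :
    rless (X.orderEmbOfFin hX i) X = i := by
  have hcard (a : Fin n) : #{x ∈ X | x < a} = #{j | X.orderEmbOfFin hX j < a} := by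
    conv_lhs => rw [← map_orderEmbOfFin_univ X hX, filter_map, card_map]
    rfl
  rw [rless, hcard]
  simp only [OrderEmbedding.lt_iff_lt, filter_gt_eq_Iio, Fin.card_Iio]

end OrderEmbOfFin

section Minor

variable {K : Type} [CommRing K] {m p k : ℕ} {A B : Matrix (Fin m) (Fin p) K}
  {S : Finset (Fin m)} {T : Finset (Fin p)}

theorem minorDet_eq_det_submatrix (A : Matrix (Fin m) (Fin p) K) (hS : #S = k) (hT : #T = k) :
    minorDet A S T = (A.submatrix (S.orderEmbOfFin hS) (T.orderEmbOfFin hT)).det := by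
  subst hS
  exact dif_pos hT

theorem minorDet_empty (A : Matrix (Fin m) (Fin p) K) : minorDet A ∅ ∅ = 1 := by
  rw [minorDet_eq_det_submatrix A card_empty card_empty, Matrix.det_fin_zero]

theorem minorDet_congr (hAB : ∀ s ∈ S, ∀ t ∈ T, A s t = B s t) :
    minorDet A S T = minorDet B S T := by
  unfold minorDet
  split_ifs with hcard
  · congr 1
    ext i j
    exact hAB _ (orderEmbOfFin_mem _ _ _) _ (orderEmbOfFin_mem _ _ _)
  · rfl

theorem minorDet_eq_zero_of_row_eq_zero {a : Fin m} (ha : a ∈ S) (hA : ∀ t ∈ T, A a t = 0) :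
    minorDet A S T = 0 := by
  unfold minorDet
  split_ifs with hcard
  · obtain ⟨i, rfl⟩ := exists_orderEmbOfFin_eq rfl ha
    exact Matrix.det_eq_zero_of_row_eq_zero i fun j => hA _ (orderEmbOfFin_mem _ _ _)
  · rfl

theorem minorDet_submatrix_swap (A : Matrix (Fin m) (Fin p) K) (T : Finset (Fin p)) {a b : Fin m}
    (ha : a ∈ S) (hb : b ∈ S) (hab : a ≠ b) :
    minorDet (A.submatrix (swap a b) id) S T = -minorDet A S T := by
  unfold minorDet
  split_ifs with hcard
  · obtain ⟨i, rfl⟩ := exists_orderEmbOfFin_eq rfl ha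
    obtain ⟨j, rfl⟩ := exists_orderEmbOfFin_eq rfl hb
    have hij : i ≠ j := fun h => hab (congrArg _ h)
    have hswap : swap (S.orderEmbOfFin rfl i) (S.orderEmbOfFin rfl j) ∘ S.orderEmbOfFin rfl =
        S.orderEmbOfFin rfl ∘ swap i j :=
      funext ((S.orderEmbOfFin rfl).injective.swap_apply i j)
    rw [Matrix.submatrix_submatrix, hswap, Function.id_comp,
      ← Function.comp_id (T.orderEmbOfFin hcard), ← Matrix.submatrix_submatrix,
      Matrix.det_permute, Perm.sign_swap hij]
    simp
  · exact neg_zero.symm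

theorem minorDet_eq_mul_minorDet_erase {a : Fin m} {b : Fin p} (ha : a ∈ S) (hb : b ∈ T)
    (hcard : #S = #T) (hA : ∀ t ∈ T, t ≠ b → A a t = 0) :
    minorDet A S T =
      (-1) ^ (rless a S + rless b T) * A a b * minorDet A (S.erase a) (T.erase b) := by
  obtain ⟨k, hk⟩ : ∃ k, #S = k + 1 := Nat.exists_eq_add_one.mpr (card_pos.mpr ⟨a, ha⟩)
  have hTk : #T = k + 1 := hcard ▸ hk
  have hSe : #(S.erase a) = k := by rw [card_erase_of_mem ha, hk, Nat.add_sub_cancel]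
  have hTe : #(T.erase b) = k := by rw [card_erase_of_mem hb, hTk, Nat.add_sub_cancel]
  obtain ⟨i, rfl⟩ := exists_orderEmbOfFin_eq hk ha
  obtain ⟨j, rfl⟩ := exists_orderEmbOfFin_eq hTk hb
  rw [minorDet_eq_det_submatrix A hk hTk, minorDet_eq_det_submatrix A hSe hTe,
    orderEmbOfFin_erase_orderEmbOfFin, orderEmbOfFin_erase_orderEmbOfFin, rless_orderEmbOfFin,
    rless_orderEmbOfFin, ← Matrix.submatrix_submatrix, Matrix.det_succ_row _ i]
  refine Fintype.sum_eq_single j fun l hl => ?_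
  rw [Matrix.submatrix_apply, hA _ (orderEmbOfFin_mem _ _ _) (by simpa using hl), mul_zero,
    zero_mul]

end Minor

section PermMatrix

variable {K : Type} [CommRing K] {n : ℕ} {S T U V : Finset (Fin n)} {π : Perm (Fin n)}

theorem permMatrix_apply_eq_ite {α R : Type*} [DecidableEq α] [Zero R] [One R] (π : Perm α)
    (i j : α) : π.permMatrix R i j = if π i = j then 1 else 0 := by
  simp [PEquiv.toMatrix_apply]

theorem image_inv_eq {α : Type*} [DecidableEq α] {π : Perm α} {S T : Finset α}
    (h : S.image π = T) : T.image ⇑π⁻¹ = S := by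
  rw [← h, image_image, ← Perm.coe_mul, inv_mul_cancel, Perm.coe_one, image_id]

theorem minorDet_permMatrix_eq_zero_of_image_ne (h : S.image π ≠ T) :
    minorDet (π.permMatrix K) S T = 0 := by
  by_cases hcard : #T = #S
  · obtain ⟨a, ha, haT⟩ : ∃ a ∈ S, π a ∉ T := by
      by_contra! hmaps
      exact h (eq_of_subset_of_card_le (image_subset_iff.mpr hmaps)
        (by rw [card_image_of_injective _ π.injective, hcard]))
    refine minorDet_eq_zero_of_row_eq_zero ha fun t ht => ?_
    rw [permMatrix_apply_eq_ite, if_neg (ne_of_mem_of_not_mem ht haT).symm]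
  · exact dif_neg hcard

theorem minorDet_permMatrix_eq_mul_erase (h : S.image π = T) {a : Fin n} (ha : a ∈ S) :
    minorDet (π.permMatrix K) S T = (-1) ^ (rless a S + rless (π a) T) *
      minorDet (π.permMatrix K) (S.erase a) (T.erase (π a)) := by
  have haT : π a ∈ T := h ▸ mem_image_of_mem π ha
  have hcard : #S = #T := by rw [← h, card_image_of_injective _ π.injective]
  rw [minorDet_eq_mul_minorDet_erase ha haT hcard fun t _ ht => by
      rw [permMatrix_apply_eq_ite, if_neg ht.symm],
    permMatrix_apply_eq_ite, if_pos rfl, mul_one]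

theorem minorDet_permMatrix_mul_minorDet_inv_eq_one (h : S.image π = T) :
    minorDet (π.permMatrix K) S T * minorDet (π⁻¹.permMatrix K) T S = 1 := by
  induction S using Finset.induction_on generalizing T with
  | empty => rw [← h, image_empty, minorDet_empty, minorDet_empty, one_mul]
  | insert a W ha ih =>
    have haT : π a ∈ T := h ▸ mem_image_of_mem π (mem_insert_self a W)
    have hinv : π⁻¹ (π a) = a := π.symm_apply_apply a
    have hW : W.image π = T.erase (π a) := by
      rw [← h, image_insert, erase_insert (by simpa using ha)]
    rw [minorDet_permMatrix_eq_mul_erase h (mem_insert_self a W),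
      minorDet_permMatrix_eq_mul_erase (image_inv_eq h) haT, hinv, erase_insert ha,
      mul_mul_mul_comm, ih hW, mul_one, add_comm (rless (π a) T), ← mul_pow, neg_one_mul, neg_neg,
      one_pow]

/-- The first sum in the definition of `s(X, Y)`, so that `s(X, Y)` is the difference of the values
at `(X, Y)` and at `(Y, X)`. -/
def sdiffRankSum (X Y : Finset (Fin n)) : ℕ := ∑ t ∈ X \ Y, rless t X

theorem sSign_eq_sdiffRankSum_sub (X Y : Finset (Fin n)) :
    sSign X Y = sdiffRankSum X Y - sdiffRankSum Y X := by
  simp only [sSign, sdiffRankSum, Nat.cast_sum]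

theorem minorDet_permMatrix_eq_mul_inter (hST : S.image π = T) (hVU : V.image π = U)
    (hSV : #(S \ V) ≤ 1) :
    minorDet (π.permMatrix K) S T = (-1) ^ (sdiffRankSum S V + sdiffRankSum T U) *
      minorDet (π.permMatrix K) (S ∩ V) (T ∩ U) := by
  have hTU : (S \ V).image π = T \ U := by rw [image_sdiff _ _ π.injective, hST, hVU]
  rw [sdiffRankSum, sdiffRankSum, ← inf_eq_inter, ← inf_eq_inter, ← sdiff_sdiff_right_self,
    ← sdiff_sdiff_right_self, ← hTU]
  obtain hempty | ⟨a, hsingle⟩ : S \ V = ∅ ∨ ∃ a, S \ V = {a} := by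
    rwa [← card_eq_zero, ← card_eq_one, ← Nat.le_one_iff_eq_zero_or_eq_one]
  · simp [hempty]
  · have ha : a ∈ S := (mem_sdiff.mp (hsingle ▸ mem_singleton_self a)).1
    rw [hsingle, image_singleton, sum_singleton, sum_singleton, sdiff_singleton_eq_erase,
      sdiff_singleton_eq_erase, minorDet_permMatrix_eq_mul_erase hST ha]

theorem coe_neg_one_zpow_sSign_add (X Y X' Y' : Finset (Fin n)) :
    (((-1 : Kˣ) ^ (sSign X Y + sSign X' Y') : Kˣ) : K) =
      (-1) ^ (sdiffRankSum X' Y' + sdiffRankSum X Y) *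
        (-1) ^ (sdiffRankSum Y X + sdiffRankSum Y' X') := by
  simp only [sSign_eq_sdiffRankSum_sub, zpow_add, zpow_sub, zpow_natCast, Units.val_mul,
    ← inv_pow, inv_neg_one, Units.val_pow_eq_pow_val, Units.val_neg, Units.val_one]
  ring

theorem minorDet_permMatrix_mul_minorDet_inv_eq_sign (hST : S.image π = T) (hVU : V.image π = U)
    (hSV : #(S \ V) ≤ 1) (hVS : #(V \ S) ≤ 1) :
    minorDet (π.permMatrix K) S T * minorDet (π⁻¹.permMatrix K) U V =
      (((-1 : Kˣ) ^ (sSign T U + sSign S V) : Kˣ) : K) := by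
  have hUT : #(U \ T) ≤ 1 := by
    rwa [← hST, ← hVU, ← image_sdiff _ _ π.injective, card_image_of_injective _ π.injective]
  have hinter : (S ∩ V).image π = T ∩ U := by rw [image_inter _ _ π.injective, hST, hVU]
  rw [minorDet_permMatrix_eq_mul_inter hST hVU hSV,
    minorDet_permMatrix_eq_mul_inter (image_inv_eq hVU) (image_inv_eq hST) hUT,
    inter_comm U T, inter_comm V S, mul_mul_mul_comm,
    minorDet_permMatrix_mul_minorDet_inv_eq_one hinter, mul_one, coe_neg_one_zpow_sSign_add]

theorem minorDet_permMatrix_mul_minorDet_inv_eq_zero (h : ¬(S.image π = T ∧ V.image π = U)) :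
    minorDet (π.permMatrix K) S T * minorDet (π⁻¹.permMatrix K) U V = 0 := by
  by_cases hST : S.image π = T
  · have hUV : U.image ⇑π⁻¹ ≠ V := fun hUV => h ⟨hST, inv_inv π ▸ image_inv_eq hUV⟩
    rw [minorDet_permMatrix_eq_zero_of_image_ne hUV, mul_zero]
  · rw [minorDet_permMatrix_eq_zero_of_image_ne hST, zero_mul]

theorem minorDet_permMatrix_mul_swap (T : Finset (Fin n)) {a b : Fin n} (ha : a ∈ S) (hb : b ∈ S)
    (hab : a ≠ b) :
    minorDet ((π * swap a b).permMatrix K) S T = -minorDet (π.permMatrix K) S T := by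
  rw [← minorDet_submatrix_swap _ T ha hb hab]
  refine minorDet_congr fun s _ t _ => ?_
  rw [Matrix.submatrix_apply, permMatrix_apply_eq_ite, permMatrix_apply_eq_ite, Perm.mul_apply, id]

theorem minorDet_permMatrix_mul_swap_inv (U : Finset (Fin n)) {a b : Fin n} (ha : a ∉ V)
    (hb : b ∉ V) :
    minorDet ((π * swap a b)⁻¹.permMatrix K) U V = minorDet (π⁻¹.permMatrix K) U V := by
  refine minorDet_congr fun u _ v hv => ?_
  have hfix : swap a b v = v :=
    swap_apply_of_ne_of_ne (ne_of_mem_of_not_mem hv ha) (ne_of_mem_of_not_mem hv hb)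
  simp only [permMatrix_apply_eq_ite, mul_inv_rev, swap_inv, Perm.mul_apply, swap_apply_eq_iff,
    hfix]

theorem sum_minorDet_permMatrix_mul_inv_eq_zero_of_one_lt_card_sdiff (T U : Finset (Fin n))
    (hSV : 1 < #(S \ V)) :
    ∑ π : Perm (Fin n), minorDet (π.permMatrix K) S T * minorDet (π⁻¹.permMatrix K) U V = 0 := by
  obtain ⟨a, ha, b, hb, hab⟩ := one_lt_card.mp hSV
  rw [mem_sdiff] at ha hb
  refine sum_involution (fun π _ => π * swap a b) (fun π _ => ?_) (fun π _ _ => ?_)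
    (fun π _ => mem_univ _) (fun π _ => ?_)
  · rw [minorDet_permMatrix_mul_swap T ha.1 hb.1 hab, minorDet_permMatrix_mul_swap_inv U ha.2 hb.2,
      neg_mul, add_neg_cancel]
  · rwa [Ne, mul_eq_left, swap_eq_one_iff]
  · rw [mul_assoc, swap_mul_self, mul_one]

theorem sum_minorDet_permMatrix_mul_inv_comm (S T U V : Finset (Fin n)) :
    ∑ π : Perm (Fin n), minorDet (π.permMatrix K) S T * minorDet (π⁻¹.permMatrix K) U V =
      ∑ π : Perm (Fin n), minorDet (π.permMatrix K) U V * minorDet (π⁻¹.permMatrix K) S T := by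
  rw [← Equiv.sum_comp (Equiv.inv (Perm (Fin n)))]
  simp only [Equiv.inv_apply, inv_inv, mul_comm]

end PermMatrix

section Counting

variable {α : Type*} [DecidableEq α]

theorem card_perm_comp_eq {ι : Type*} [Fintype α] [Fintype ι] [DecidableEq ι] (f g : α → ι)
    (h : ∀ i, Fintype.card {a // f a = i} = Fintype.card {a // g a = i}) :
    Fintype.card {π : Perm α // g ∘ π = f} = ∏ i, (Fintype.card {a // f a = i})! := by
  let e : Perm α := Equiv.ofFiberEquiv fun i => Fintype.equivOfCardEq (h i)
  have he : g ∘ e = f := funext (Equiv.ofFiberEquiv_map _)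
  rw [← DomMulAct.stabilizer_card f]
  refine Fintype.card_congr ((Equiv.mulLeft e⁻¹).subtypeEquiv fun π => ?_)
  rw [← he, Equiv.coe_mulLeft, Function.comp_assoc, ← Perm.coe_mul, mul_inv_cancel_left]

/-- The block of `x` in the partition of `α` by membership in `S` and in `V`, encoded by two
Booleans. A permutation carries `S` to `T` and `V` to `U` iff it intertwines the two block maps. -/
def membershipPair (S V : Finset α) (x : α) : Bool × Bool := (decide (x ∈ S), decide (x ∈ V))

theorem card_membershipPair_fiber [Fintype α] (S V : Finset α) (i : Bool × Bool) :
    Fintype.card {x // membershipPair S V x = i} =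
      match i with
      | (true, true) => #(S ∩ V)
      | (true, false) => #(S \ V)
      | (false, true) => #(V \ S)
      | (false, false) => #(S ∪ V)ᶜ := by
  rw [Fintype.card_subtype]
  rcases i with ⟨_ | _, _ | _⟩ <;> dsimp only <;> congr 1 <;> ext x <;>
    simp [membershipPair, and_comm]

theorem membershipPair_comp_eq_iff (π : Perm α) (S T U V : Finset α) :
    membershipPair T U ∘ π = membershipPair S V ↔ S.image π = T ∧ V.image π = U := by
  have image_eq_iff (X Y : Finset α) : X.image π = Y ↔ ∀ x, π x ∈ Y ↔ x ∈ X := by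
    rw [Finset.ext_iff, π.surjective.forall]
    simp [iff_comm]
  simp [image_eq_iff, funext_iff, membershipPair, forall_and]

theorem card_perm_image_eq_and_image_eq [Fintype α] {S T U V : Finset α}
    (hST : #S = #T) (hUV : #U = #V) (hinter : #(S ∩ V) = #(T ∩ U)) :
    #{π : Perm α | S.image π = T ∧ V.image π = U} =
      (#(S ∩ V))! * (#(S \ V))! * ((#(V \ S))! * (#(S ∪ V)ᶜ)!) := by
  have hfiber (i : Bool × Bool) : Fintype.card {x // membershipPair S V x = i} =
      Fintype.card {x // membershipPair T U x = i} := by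
    rw [card_membershipPair_fiber, card_membershipPair_fiber]
    rcases i with ⟨_ | _, _ | _⟩ <;> grind [card_compl]
  simp only [← membershipPair_comp_eq_iff]
  rw [← Fintype.card_subtype, card_perm_comp_eq _ _ hfiber, Fintype.prod_prod_type]
  simp only [Fintype.prod_bool, card_membershipPair_fiber]

end Counting

theorem stmt_0_general {K : Type} [CommRing K] {n : ℕ} {S T U V : Finset (Fin n)}
    (hST : #S = #T) (hUV : #U = #V) :
    ∑ π : Perm (Fin n), minorDet (π.permMatrix K) S T * minorDet (π⁻¹.permMatrix K) U V =
      if #(S ∩ V) = #(T ∩ U) ∧ #(S \ V) ≤ 1 ∧ #(V \ S) ≤ 1 then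
        (((#(S ∩ V))! * (#(S ∪ V)ᶜ)! : ℕ) : K) *
          (((-1 : Kˣ) ^ (sSign T U + sSign S V) : Kˣ) : K)
      else 0 := by
  split_ifs with h
  · obtain ⟨hinter, hSV, hVS⟩ := h
    have hterm (π : Perm (Fin n)) :
        minorDet (π.permMatrix K) S T * minorDet (π⁻¹.permMatrix K) U V =
          if S.image π = T ∧ V.image π = U then
            (((-1 : Kˣ) ^ (sSign T U + sSign S V) : Kˣ) : K) else 0 := by
      split_ifs with hπ
      · exact minorDet_permMatrix_mul_minorDet_inv_eq_sign hπ.1 hπ.2 hSV hVS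
      · exact minorDet_permMatrix_mul_minorDet_inv_eq_zero hπ
    rw [sum_congr rfl fun π _ => hterm π, ← sum_filter, sum_const, nsmul_eq_mul,
      card_perm_image_eq_and_image_eq hST hUV hinter, Nat.factorial_eq_one.mpr hSV,
      Nat.factorial_eq_one.mpr hVS, mul_one, one_mul]
  · by_cases hinter : #(S ∩ V) = #(T ∩ U)
    · obtain hSV | hUT : 1 < #(S \ V) ∨ 1 < #(U \ T) := by grind
      · exact sum_minorDet_permMatrix_mul_inv_eq_zero_of_one_lt_card_sdiff T U hSV
      · rw [sum_minorDet_permMatrix_mul_inv_comm]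
        exact sum_minorDet_permMatrix_mul_inv_eq_zero_of_one_lt_card_sdiff V S hUT
    · refine sum_eq_zero fun π _ => minorDet_permMatrix_mul_minorDet_inv_eq_zero ?_
      rintro ⟨rfl, rfl⟩
      rw [← image_inter _ _ π.injective, card_image_of_injective _ π.injective] at hinter
      exact hinter rfl

theorem stmt_0 {K : Type} [CommRing K] (n k : ℕ) (hkn : k ≤ n)
    (S T U V : Finset (Fin n))
    (hS : S.card = k) (hT : T.card = k) (hU : U.card = k) (hV : V.card = k)
    (j : ℕ) (hj : j = (S ∩ V).card) :
    ∑ π : Equiv.Perm (Fin n),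
        minorDet (π.permMatrix K) S T * minorDet ((π⁻¹).permMatrix K) U V =
      if (S ∩ V).card = (T ∩ U).card ∧ k - 1 ≤ (S ∩ V).card then
        ((j.factorial * (n - (2 * k - j)).factorial : ℕ) : K) *
          (((-1 : Kˣ) ^ (sSign T U + sSign S V) : Kˣ) : K)
      else 0 := by
  have hcond : (#(S \ V) ≤ 1 ∧ #(V \ S) ≤ 1) ↔ k - 1 ≤ #(S ∩ V) := by grind
  have hcompl : #(S ∪ V)ᶜ = n - (2 * k - j) := by grind [card_compl, Fintype.card_fin]
  simp only [stmt_0_general (hS.trans hT.symm) (hU.trans hV.symm), hcond, hcompl, hj]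
end

section
/- Let K be a commutative ring, n and k natural numbers with k ≤ n, and let S, T, U, V be subsets of {1,…,n} each of size k. If |S ∩ V| = |T ∩ U| and |S ∩ V| ≤ k−2 (equivalently, |S ∖ (S ∩ V)| ≥ 2), then ∑_{P ∈ 𝒫_n} [P]_{S,T}·[P^{-1}]_{U,V} = 0. -/
/-!
Fix distinct `a, b ∈ S \ V` and pair each permutation `π` with `π * swap a b`. On the matrix of `π`
this exchanges the rows `a` and `b`, both of which occur in the minor on `S, T`, so that minor
changes sign. On the inverse matrix it exchanges the columns `a` and `b`, neither of which occurs in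
the minor on `U, V`, so that minor is unchanged. Hence the two paired terms cancel. Cancelling in
pairs, rather than deriving `x = -x` for the whole sum, works also where `2` is a zero divisor.
-/

open Equiv

section PermMatrix

variable {R m ι κ : Type*} [Zero R] [One R] [DecidableEq m]

theorem submatrix_permMatrix_mul (π σ : Perm m) (r : ι → m) (c : κ → m) :
    ((π * σ).permMatrix R).submatrix r c = (π.permMatrix R).submatrix (σ ∘ r) c :=
  rfl

theorem submatrix_permMatrix_mul_inv (π σ : Perm m) (r : ι → m) (c : κ → m) :
    ((π * σ)⁻¹.permMatrix R).submatrix r c = (π⁻¹.permMatrix R).submatrix r (σ ∘ c) := by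
  ext i j
  simp [Perm.permMatrix, PEquiv.toMatrix_apply, symm_apply_eq]

end PermMatrix

theorem det_submatrix_swap_comp {R m p ι : Type*} [CommRing R] [DecidableEq m] [Fintype ι]
    [DecidableEq ι] (A : Matrix m p R) {r : ι → m} (hr : r.Injective) (c : ι → p) {i j : ι}
    (hij : i ≠ j) :
    (A.submatrix (swap (r i) (r j) ∘ r) c).det = -(A.submatrix r c).det :=
  calc (A.submatrix (swap (r i) (r j) ∘ r) c).det
    _ = ((A.submatrix r c).submatrix (swap i j) id).det := by
      rw [hr.swap_comp, Matrix.submatrix_submatrix, Function.comp_id]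
    _ = -(A.submatrix r c).det := by
      rw [Matrix.det_permute, Perm.sign_swap hij, Units.val_neg, Units.val_one, Int.cast_neg,
        Int.cast_one, neg_one_mul]

theorem swap_comp_eq_self_of_notMem_range {m κ : Type*} [DecidableEq m] {a b : m} {v : κ → m}
    (ha : a ∉ Set.range v) (hb : b ∉ Set.range v) : swap a b ∘ v = v :=
  funext fun x ↦ swap_apply_of_ne_of_ne (fun h ↦ ha ⟨x, h⟩) (fun h ↦ hb ⟨x, h⟩)

theorem sum_det_submatrix_permMatrix_mul_det_submatrix_inv_eq_zero {R m ι κ : Type*} [CommRing R]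
    [Fintype m] [DecidableEq m] [Fintype ι] [DecidableEq ι] [Fintype κ] [DecidableEq κ]
    {r : ι → m} (hr : r.Injective) (c : ι → m) (u v : κ → m) {i j : ι} (hij : i ≠ j)
    (hi : r i ∉ Set.range v) (hj : r j ∉ Set.range v) :
    ∑ π : Perm m,
      ((π.permMatrix R).submatrix r c).det * ((π⁻¹.permMatrix R).submatrix u v).det = 0 := by
  refine Finset.sum_involution (fun π _ ↦ π * swap (r i) (r j)) ?cancel ?no_fixed_point
    (fun _ _ ↦ Finset.mem_univ _) (fun π _ ↦ mul_swap_mul_self _ _ π)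
  case cancel =>
    intro π _
    rw [submatrix_permMatrix_mul, submatrix_permMatrix_mul_inv, det_submatrix_swap_comp _ hr c hij,
      swap_comp_eq_self_of_notMem_range hi hj, neg_mul, add_neg_cancel]
  case no_fixed_point =>
    intro π _ _ hfixed
    exact hij (hr (swap_eq_one_iff.mp (mul_eq_left.mp hfixed)))

theorem stmt_2_general {K : Type} [CommRing K] {n : ℕ} (S T U V : Finset (Fin n))
    (hST : T.card = S.card) (hUV : V.card = U.card) (htwo : 2 ≤ (S \ V).card) :
    ∑ π : Perm (Fin n),
        minorDet (π.permMatrix K) S T * minorDet ((π⁻¹).permMatrix K) U V = 0 := by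
  obtain ⟨a, ha, b, hb, hab⟩ := Finset.one_lt_card.mp htwo
  rw [Finset.mem_sdiff] at ha hb
  obtain ⟨i, rfl⟩ : a ∈ Set.range (S.orderEmbOfFin rfl) := by simpa using ha.1
  obtain ⟨j, rfl⟩ : b ∈ Set.range (S.orderEmbOfFin rfl) := by simpa using hb.1
  simp only [minorDet, dif_pos hST, dif_pos hUV]
  exact sum_det_submatrix_permMatrix_mul_det_submatrix_inv_eq_zero
    (S.orderEmbOfFin rfl).injective _ _ _ (ne_of_apply_ne _ hab)
    (by simpa using ha.2) (by simpa using hb.2)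

theorem stmt_2 {K : Type} [CommRing K] (n k : ℕ) (hkn : k ≤ n)
    (S T U V : Finset (Fin n))
    (hS : S.card = k) (hT : T.card = k) (hU : U.card = k) (hV : V.card = k)
    (hcard : (S ∩ V).card = (T ∩ U).card) (htwo : 2 ≤ (S \ V).card) :
    ∑ π : Equiv.Perm (Fin n),
        minorDet (π.permMatrix K) S T * minorDet ((π⁻¹).permMatrix K) U V = 0 :=
  stmt_2_general S T U V (hT.trans hS.symm) (hV.trans hU.symm) htwo
end

section
/- Let K be a commutative ring, n and k natural numbers with k ≤ n, and let S, T, U, V be subsets of {1,…,n} each of size k with |S ∩ V| = |T ∩ U| = k−1. Let π be a permutation of {1,…,n} with π(S) = T and π(V) = U, and let P_π be its permutation matrix over K. Then [P_π]_{S,T}·[P_π^{-1}]_{U,V} = (−1)^{s(T,U)+s(S,V)}, where −1 is the negation of the multiplicative identity of K. -/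
/-!
A minor of a permutation matrix whose rows `S` and columns `π(S)` correspond is the sign of `π`
restricted to `S`, that is, `-1` to the number of inversions of `π` inside `S`. Split the
inversions inside `S` along `S = (S ∩ V) ∪ (S \ V)`. A pair `x ≠ y` is an inversion, in one order
or the other, exactly when the comparisons `x < y` and `π x < π y` disagree; hence the mixed
inversions are counted modulo `2` by the ranks of the elements `t ∈ S \ V` in `S` and of their
images in `π(S)`: the pairs inside `S \ V` that these ranks also count are equally many in `S` and
in `π(S)`. The same holds for `V`, and the inversions inside `S ∩ V` occur twice and cancel. Only
those inside `S \ V` and `V \ S` remain, and there are none when these sets have at most one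
element.
-/

section InversionSign

variable {α β γ δ : Type*} [LinearOrder α] [LinearOrder β] [LinearOrder γ] [LinearOrder δ]

/-- The sign `-1` if `x < y` and `1` otherwise; its products over `x` are the parities of the
ranks `r(y, X)`. -/
def ltSign (x y : α) : ℤˣ := if x < y then -1 else 1

/-- The sign `-1` if `f` inverts the pair `x < y`, and `1` otherwise (in particular for `y ≤ x`, so
that a product over ordered pairs counts each inversion once). -/
def pairSign (f : α → β) (x y : α) : ℤˣ := if x < y ∧ f y < f x then -1 else 1

/-- The sign of `f` restricted to `S`: `-1` to the number of inversions of `f` inside `S`. -/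
def inversionSign (f : α → β) (S : Finset α) : ℤˣ := ∏ y ∈ S, ∏ x ∈ S, pairSign f x y

theorem pairSign_self (f : α → β) (x : α) : pairSign f x x = 1 := by
  simp [pairSign]

theorem pairSign_mul_pairSign_swap {f : α → β} (hf : f.Injective) (x y : α) :
    pairSign f x y * pairSign f y x = ltSign x y * ltSign (f x) (f y) := by
  rcases eq_or_ne x y with rfl | hxy
  · simp [pairSign, ltSign]
  · rcases hxy.lt_or_gt with h | h <;> rcases (hf.ne hxy).lt_or_gt with h' | h' <;>
      simp [pairSign, ltSign, h, h', h.not_gt, h'.not_gt]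

theorem pairSign_symm_apply_apply (e : α ≃ β) (x y : α) :
    pairSign e.symm (e x) (e y) = pairSign e y x := by
  simp [pairSign, and_comm]

theorem inversionSign_symm_image (e : α ≃ β) (S : Finset α) :
    inversionSign e.symm (S.image e) = inversionSign e S := by
  simp only [inversionSign, Finset.prod_image e.injective.injOn, pairSign_symm_apply_apply]
  exact Finset.prod_comm

theorem inversionSign_of_card_le_one (f : α → β) {S : Finset α} (hS : S.card ≤ 1) :
    inversionSign f S = 1 :=
  Finset.prod_eq_one fun y hy => Finset.prod_eq_one fun x hx => by
    rw [Finset.card_le_one.1 hS x hx y hy, pairSign_self]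

theorem inversionSign_map_orderEmbedding {f : α → β} {g : γ → δ} (i : γ ↪o α) (j : δ ↪o β)
    (h : ∀ c, f (i c) = j (g c)) (S : Finset γ) :
    inversionSign f (S.map i.toEmbedding) = inversionSign g S := by
  simp [inversionSign, pairSign, h]

theorem inversionSign_univ {m : ℕ} (σ : Equiv.Perm (Fin m)) :
    inversionSign σ Finset.univ = Equiv.Perm.sign σ := by
  rw [Equiv.Perm.sign_eq_prod_prod_Iio, inversionSign]
  refine Finset.prod_congr rfl fun y _ => ?_
  have pairSign_of_lt : ∀ x ∈ Finset.Iio y,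
      (if σ x < σ y then 1 else -1) = pairSign σ x y := fun x hx => by
    have hxy : x < y := Finset.mem_Iio.1 hx
    rcases (σ.injective.ne hxy.ne).lt_or_gt with h | h <;> simp [pairSign, hxy, h, h.not_gt]
  rw [Finset.prod_congr rfl pairSign_of_lt]
  refine (Finset.prod_subset (Finset.subset_univ _) fun x _ hx => ?_).symm
  simp [pairSign, show ¬x < y by simpa using hx]

theorem prod_prod_ltSign_mul_ltSign_self {f : α → β} (hf : f.Injective) (D : Finset α) :
    ∏ y ∈ D, ∏ x ∈ D, ltSign x y * ltSign (f x) (f y) = 1 := by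
  calc ∏ y ∈ D, ∏ x ∈ D, ltSign x y * ltSign (f x) (f y)
      = inversionSign f D * ∏ y ∈ D, ∏ x ∈ D, pairSign f y x := by
        simp only [← pairSign_mul_pairSign_swap hf, Finset.prod_mul_distrib, inversionSign]
    _ = inversionSign f D * inversionSign f D := by
        rw [Finset.prod_comm (f := fun y x => pairSign f y x), inversionSign]
    _ = 1 := Int.units_mul_self _

theorem inversionSign_union {f : α → β} (hf : f.Injective) {D W : Finset α}
    (hDW : Disjoint D W) :
    inversionSign f (D ∪ W) = inversionSign f W * inversionSign f D *
      ∏ y ∈ D, ∏ x ∈ D ∪ W, ltSign x y * ltSign (f x) (f y) := by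
  have mixed_pairs : ∏ y ∈ D, ∏ x ∈ D ∪ W, ltSign x y * ltSign (f x) (f y) =
      ∏ y ∈ D, ∏ x ∈ W, ltSign x y * ltSign (f x) (f y) := by
    simp only [Finset.prod_union hDW]
    rw [Finset.prod_mul_distrib, prod_prod_ltSign_mul_ltSign_self hf, one_mul]
  rw [mixed_pairs]
  simp only [inversionSign, ← pairSign_mul_pairSign_swap hf, Finset.prod_union hDW,
    Finset.prod_mul_distrib]
  rw [Finset.prod_comm (s := W) (t := D)]
  ac_rfl

theorem inversionSign_eq_inter_mul_sdiff {f : α → β} (hf : f.Injective) (S V : Finset α) :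
    inversionSign f S = inversionSign f (S ∩ V) * inversionSign f (S \ V) *
      ∏ y ∈ S \ V, ∏ x ∈ S, ltSign x y * ltSign (f x) (f y) := by
  simpa only [Finset.sdiff_union_inter] using
    inversionSign_union hf (Finset.disjoint_sdiff_inter S V)

end InversionSign

section Rank

variable {m n : ℕ}

theorem neg_one_pow_rless (t : Fin n) (X : Finset (Fin n)) :
    (-1 : ℤˣ) ^ rless t X = ∏ x ∈ X, ltSign x t := by
  simp [ltSign, rless, Finset.prod_ite]

theorem neg_one_zpow_sSign (X Y : Finset (Fin n)) :
    (-1 : ℤˣ) ^ sSign X Y =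
      (∏ t ∈ X \ Y, ∏ x ∈ X, ltSign x t) * ∏ t ∈ Y \ X, ∏ x ∈ Y, ltSign x t := by
  simp only [sSign, ← Nat.cast_sum, zpow_sub, zpow_natCast, Int.units_inv_eq_self,
    ← Finset.prod_pow_eq_pow_sum, neg_one_pow_rless]

theorem neg_one_zpow_sSign_image_add_sSign {f : Fin n → Fin m} (hf : f.Injective)
    (S V : Finset (Fin n)) :
    (-1 : ℤˣ) ^ (sSign (S.image f) (V.image f) + sSign S V) =
      (∏ y ∈ S \ V, ∏ x ∈ S, ltSign x y * ltSign (f x) (f y)) *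
        ∏ y ∈ V \ S, ∏ x ∈ V, ltSign x y * ltSign (f x) (f y) := by
  simp only [zpow_add, neg_one_zpow_sSign, ← Finset.image_sdiff _ _ hf,
    Finset.prod_image hf.injOn, Finset.prod_mul_distrib]
  ac_rfl

theorem inversionSign_mul_inversionSign {f : Fin n → Fin m} (hf : f.Injective)
    (S V : Finset (Fin n)) :
    inversionSign f S * inversionSign f V =
      (-1 : ℤˣ) ^ (sSign (S.image f) (V.image f) + sSign S V) *
        (inversionSign f (S \ V) * inversionSign f (V \ S)) := by
  have inter_cancels : inversionSign f (S ∩ V) * inversionSign f (S ∩ V) = 1 :=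
    Int.units_mul_self _
  rw [neg_one_zpow_sSign_image_add_sSign hf, inversionSign_eq_inter_mul_sdiff hf S V,
    inversionSign_eq_inter_mul_sdiff hf V S, Finset.inter_comm V S,
    mul_mul_mul_comm, mul_mul_mul_comm (inversionSign f (S ∩ V)), inter_cancels, one_mul, mul_comm]

end Rank

section Minor

theorem intCast_neg_one_zpow {R : Type*} [Ring R] (z : ℤ) :
    ((((-1 : ℤˣ) ^ z : ℤˣ) : ℤ) : R) = (((-1 : Rˣ) ^ z : Rˣ) : R) := by
  rcases z.even_or_odd with h | h <;> simp [h.neg_one_zpow]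

variable {K : Type} [CommRing K] {n : ℕ}

theorem minorDet_permMatrix (π : Equiv.Perm (Fin n)) {S T : Finset (Fin n)}
    (hST : S.image π = T) :
    minorDet (π.permMatrix K) S T = ((inversionSign π S : ℤ) : K) := by
  have hcard : T.card = S.card := by rw [← hST, Finset.card_image_of_injective _ π.injective]
  have mem_iff : ∀ x, x ∈ S ↔ π x ∈ T := fun x => by simp [← hST]
  let σ : Equiv.Perm (Fin S.card) := (S.orderIsoOfFin rfl).toEquiv.trans
    ((π.subtypeEquiv mem_iff).trans (T.orderIsoOfFin hcard).symm.toEquiv)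
  have orderEmb_σ : ∀ i, π (S.orderEmbOfFin rfl i) = T.orderEmbOfFin hcard (σ i) := fun i => by
    rw [← Finset.coe_orderIsoOfFin_apply T]
    simp [σ]
  have submatrix_eq : (π.permMatrix K).submatrix (S.orderEmbOfFin rfl) (T.orderEmbOfFin hcard) =
      σ.permMatrix K := by
    ext i j
    simp [Equiv.Perm.permMatrix, PEquiv.toMatrix_apply, orderEmb_σ]
  have inversionSign_eq : inversionSign π S = Equiv.Perm.sign σ := by
    rw [← inversionSign_univ, ← inversionSign_map_orderEmbedding _ _ orderEmb_σ,
      Finset.map_orderEmbOfFin_univ]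
  rw [minorDet, dif_pos hcard, submatrix_eq, Matrix.det_permutation, inversionSign_eq]

theorem minorDet_permMatrix_inv (π : Equiv.Perm (Fin n)) {U V : Finset (Fin n)}
    (hVU : V.image π = U) :
    minorDet (π⁻¹.permMatrix K) U V = ((inversionSign π V : ℤ) : K) := by
  have hUV : U.image ⇑π⁻¹ = V := by simp [← hVU, Finset.image_image]
  rw [minorDet_permMatrix π⁻¹ hUV, ← hVU]
  exact congrArg (fun u : ℤˣ => ((u : ℤ) : K)) (inversionSign_symm_image π V)

theorem stmt_4_general (π : Equiv.Perm (Fin n)) {S T U V : Finset (Fin n)}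
    (hπS : S.image π = T) (hπV : V.image π = U) :
    minorDet (π.permMatrix K) S T * minorDet (π⁻¹.permMatrix K) U V =
      (((-1 : Kˣ) ^ (sSign T U + sSign S V) : Kˣ) : K) *
        (minorDet (π.permMatrix K) (S \ V) (T \ U) *
          minorDet (π⁻¹.permMatrix K) (U \ T) (V \ S)) := by
  have hπSV : (S \ V).image π = T \ U := by rw [Finset.image_sdiff _ _ π.injective, hπS, hπV]
  have hπVS : (V \ S).image π = U \ T := by rw [Finset.image_sdiff _ _ π.injective, hπS, hπV]
  rw [minorDet_permMatrix π hπS, minorDet_permMatrix_inv π hπV, minorDet_permMatrix π hπSV,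
    minorDet_permMatrix_inv π hπVS, ← intCast_neg_one_zpow, ← hπS, ← hπV]
  exact_mod_cast congrArg (fun u : ℤˣ => ((u : ℤ) : K))
    (inversionSign_mul_inversionSign π.injective S V)

end Minor

theorem stmt_4 {K : Type} [CommRing K] (n k : ℕ) (hkn : k ≤ n)
    (S T U V : Finset (Fin n))
    (hS : S.card = k) (hT : T.card = k) (hU : U.card = k) (hV : V.card = k)
    (hSV : (S ∩ V).card = k - 1) (hTU : (T ∩ U).card = k - 1)
    (π : Equiv.Perm (Fin n)) (hπS : S.image π = T) (hπV : V.image π = U) :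
    minorDet (π.permMatrix K) S T * minorDet ((π⁻¹).permMatrix K) U V =
      (((-1 : Kˣ) ^ (sSign T U + sSign S V) : Kˣ) : K) := by
  have card_SV : (S \ V).card ≤ 1 := by
    have := Finset.card_sdiff_add_card_inter S V
    omega
  have card_VS : (V \ S).card ≤ 1 := by
    have := Finset.card_sdiff_add_card_inter V S
    rw [Finset.inter_comm] at this
    omega
  subst hπS hπV
  rw [stmt_4_general π rfl rfl, ← Finset.image_sdiff _ _ π.injective,
    ← Finset.image_sdiff _ _ π.injective, minorDet_permMatrix π rfl, minorDet_permMatrix_inv π rfl,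
    inversionSign_of_card_le_one π card_SV, inversionSign_of_card_le_one π card_VS]
  simp
end

section
/- Let K be a commutative ring, d ≥ 1, and for j = 0,…,d−1 let n_j be a natural number. For each j, let S_{1,j}, T_{1,j} be subsets of {1,…,n_j} of equal size, and let S_{2,j}, T_{2,j} be subsets of {1,…,n_{j+1 mod d}} of equal size. Then ∑_{Q_0 ∈ 𝒬_{n_0}} ⋯ ∑_{Q_{d−1} ∈ 𝒬_{n_{d−1}}} ∏_{j=0}^{d−1} [Q_j]_{S_{1,j},T_{1,j}}·[Q_{j+1 mod d}]_{S_{2,j},T_{2,j}} equals (1+1)^{n_0+⋯+n_{d−1}} (computed in K) if S_{1,j} = T_{1,j} = S_{2,j−1 mod d} = T_{2,j−1 mod d} for every j = 0,…,d−1, and equals 0 otherwise. -/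
/-- The sign matrix (diagonal matrix with entries `±1`) determined by a choice of signs `ε`. -/
def signMatrix {m : ℕ} (K : Type) [CommRing K] (ε : Fin m → Bool) : Matrix (Fin m) (Fin m) K :=
  Matrix.diagonal (fun i => if ε i then 1 else -1)

/-!
A minor of a diagonal matrix vanishes off the diagonal, and a principal one is the product of the
corresponding entries. Hence the sum over a single sign matrix of a product of two minors is an
orthogonality relation for the characters `ε ↦ ∏ i ∈ S, ε i` of the group `{±1}^m`. The shift
`j ↦ j + 1` is a permutation, so every sign matrix occurs in exactly two factors; after reindexing
one family of factors, the sum splits into a product of such orthogonality relations.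
-/

section MinorsOfDiagonal

variable {K : Type} [CommRing K] {m : ℕ} {S T : Finset (Fin m)}

theorem minorDet_diagonal_self (a : Fin m → K) (S : Finset (Fin m)) :
    minorDet (Matrix.diagonal a) S S = ∏ i ∈ S, a i := by
  rw [minorDet, dif_pos rfl, Matrix.submatrix_diagonal _ _ (S.orderEmbOfFin rfl).injective,
    Matrix.det_diagonal]
  conv_rhs => rw [← S.map_orderEmbOfFin_univ rfl, Finset.prod_map]
  rfl

theorem minorDet_diagonal_of_ne (a : Fin m → K) (hcard : S.card = T.card) (hne : S ≠ T) :
    minorDet (Matrix.diagonal a) S T = 0 := by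
  obtain ⟨i, hiS, hiT⟩ : ∃ i ∈ S, i ∉ T :=
    Finset.not_subset.mp fun hsub => hne (Finset.eq_of_subset_of_card_le hsub hcard.ge)
  obtain ⟨k, rfl⟩ : i ∈ Set.range (S.orderEmbOfFin rfl) := by
    rwa [Finset.range_orderEmbOfFin]
  rw [minorDet, dif_pos hcard.symm]
  refine Matrix.det_eq_zero_of_row_eq_zero k fun l => Matrix.diagonal_apply_ne _ fun heq => hiT ?_
  exact heq ▸ T.orderEmbOfFin_mem hcard.symm l

theorem minorDet_diagonal (a : Fin m → K) (hcard : S.card = T.card) :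
    minorDet (Matrix.diagonal a) S T = if S = T then ∏ i ∈ S, a i else 0 := by
  split_ifs with hST
  · rw [← hST, minorDet_diagonal_self]
  · exact minorDet_diagonal_of_ne a hcard hST

end MinorsOfDiagonal

section Orthogonality

variable {ι : Type*} [DecidableEq ι]

theorem prod_mul_prod_eq_prod_symmDiff {M : Type*} [CommMonoid M] {s t : Finset ι} {f : ι → M}
    (hf : ∀ i ∈ s ∩ t, f i * f i = 1) :
    (∏ i ∈ s, f i) * ∏ i ∈ t, f i = ∏ i ∈ symmDiff s t, f i := by
  have hinter : (∏ i ∈ s ∩ t, f i) * ∏ i ∈ s ∩ t, f i = 1 := by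
    rw [← Finset.prod_mul_distrib, Finset.prod_eq_one hf]
  calc (∏ i ∈ s, f i) * ∏ i ∈ t, f i
      = ((∏ i ∈ s ∩ t, f i) * ∏ i ∈ s \ t, f i) * ((∏ i ∈ s ∩ t, f i) * ∏ i ∈ t \ s, f i) := by
        rw [Finset.prod_inter_mul_prod_sdiff, Finset.inter_comm, Finset.prod_inter_mul_prod_sdiff]
    _ = (∏ i ∈ s \ t, f i) * ∏ i ∈ t \ s, f i := by
        rw [mul_mul_mul_comm, hinter, one_mul]
    _ = ∏ i ∈ symmDiff s t, f i :=
        (Finset.prod_union disjoint_sdiff_sdiff).symm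

variable {R : Type*} [CommRing R] [Fintype ι]

theorem sum_prod_signs (U : Finset ι) :
    ∑ ε : ι → Bool, ∏ i ∈ U, (if ε i then (1 : R) else -1) =
      if U = ∅ then (1 + 1) ^ Fintype.card ι else 0 := by
  have hfactor : ∑ ε : ι → Bool, ∏ i ∈ U, (if ε i then (1 : R) else -1) =
      ∏ i, ∑ b : Bool, if i ∈ U then (if b then (1 : R) else -1) else 1 := by
    simp only [Fintype.prod_sum, Finset.prod_ite_mem, Finset.univ_inter]
  rw [hfactor]
  split_ifs with hU
  · simp [hU, one_add_one_eq_two]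
  · obtain ⟨i, hi⟩ := Finset.nonempty_iff_ne_empty.mpr hU
    exact Finset.prod_eq_zero (Finset.mem_univ i) (by simp [hi])

theorem sum_prod_signs_mul_prod_signs (S T : Finset ι) :
    ∑ ε : ι → Bool,
        (∏ i ∈ S, (if ε i then (1 : R) else -1)) * ∏ i ∈ T, (if ε i then (1 : R) else -1) =
      if S = T then (1 + 1) ^ Fintype.card ι else 0 := by
  have hsq (ε : ι → Bool) (i : ι) :
      (if ε i then (1 : R) else -1) * (if ε i then (1 : R) else -1) = 1 := by
    split_ifs <;> simp
  simp only [prod_mul_prod_eq_prod_symmDiff fun i _ => hsq _ i, sum_prod_signs,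
    ← Finset.bot_eq_empty, symmDiff_eq_bot]

end Orthogonality

theorem sum_minorDet_signMatrix_mul {K : Type} [CommRing K] {m : ℕ} {S T S' T' : Finset (Fin m)}
    (h : S.card = T.card) (h' : S'.card = T'.card) :
    ∑ ε : Fin m → Bool, minorDet (signMatrix K ε) S T * minorDet (signMatrix K ε) S' T' =
      if S = T ∧ S' = T' ∧ S' = S then (1 + 1 : K) ^ m else 0 := by
  simp only [signMatrix, minorDet_diagonal _ h, minorDet_diagonal _ h']
  by_cases hST : S = T
  · by_cases hST' : S' = T'
    · simp only [hST, hST', if_true, true_and, sum_prod_signs_mul_prod_signs, Fintype.card_fin,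
        eq_comm (a := T)]
    · simp [hST']
  · simp [hST]

theorem sum_prod_mul_perm {ι R : Type*} [Fintype ι] [DecidableEq ι] [CommSemiring R]
    {X : ι → Type*} [∀ j, Fintype (X j)] (σ : Equiv.Perm ι)
    (f : ∀ j, X j → R) (g : ∀ j, X (σ j) → R) :
    ∑ x : ∀ j, X j, ∏ j, f j (x j) * g j (x (σ j)) = ∏ j, ∑ y, f (σ j) y * g j y := by
  calc ∑ x : ∀ j, X j, ∏ j, f j (x j) * g j (x (σ j))
      = ∑ x : ∀ j, X j, ∏ j, f (σ j) (x (σ j)) * g j (x (σ j)) := by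
        refine Finset.sum_congr rfl fun x _ => ?_
        rw [Finset.prod_mul_distrib, Finset.prod_mul_distrib, Equiv.prod_comp σ fun j => f j (x j)]
    _ = ∑ y : ∀ j, X (σ j), ∏ j, f (σ j) (y j) * g j (y j) := by
        simp only [← (Equiv.piCongrLeft X σ).sum_comp, Equiv.piCongrLeft_apply_apply]
    _ = ∏ j, ∑ y, f (σ j) y * g j y := by
        rw [Fintype.prod_sum]

theorem stmt_5_general {K : Type} [CommRing K] {ι : Type*} [Fintype ι] [DecidableEq ι]
    (σ : Equiv.Perm ι) (n : ι → ℕ)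
    (S1 T1 : ∀ j, Finset (Fin (n j))) (S2 T2 : ∀ j, Finset (Fin (n (σ j))))
    (h1 : ∀ j, (S1 j).card = (T1 j).card) (h2 : ∀ j, (S2 j).card = (T2 j).card) :
    ∑ ε : (∀ j, Fin (n j) → Bool),
        ∏ j, minorDet (signMatrix K (ε j)) (S1 j) (T1 j) *
          minorDet (signMatrix K (ε (σ j))) (S2 j) (T2 j) =
      if ∀ j, S1 (σ j) = T1 (σ j) ∧ S2 j = T2 j ∧ S2 j = S1 (σ j) then
        (1 + 1 : K) ^ ∑ j, n j
      else 0 := by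
  rw [sum_prod_mul_perm σ (fun j ε => minorDet (signMatrix K ε) (S1 j) (T1 j))
    (fun j ε => minorDet (signMatrix K ε) (S2 j) (T2 j))]
  simp only [sum_minorDet_signMatrix_mul (h1 _) (h2 _), Fintype.prod_ite_zero,
    Finset.prod_pow_eq_pow_sum, Equiv.sum_comp σ n]

theorem stmt_5 {K : Type} [CommRing K] (d : ℕ) [NeZero d] (n : Fin d → ℕ)
    (S1 T1 : ∀ j : Fin d, Finset (Fin (n j)))
    (S2 T2 : ∀ j : Fin d, Finset (Fin (n (j + 1))))
    (h1 : ∀ j, (S1 j).card = (T1 j).card) (h2 : ∀ j, (S2 j).card = (T2 j).card) :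
    ∑ ε : (∀ j : Fin d, Fin (n j) → Bool),
        ∏ j : Fin d,
          minorDet (signMatrix K (ε j)) (S1 j) (T1 j) *
            minorDet (signMatrix K (ε (j + 1))) (S2 j) (T2 j) =
      if ∀ j : Fin d, S1 (j + 1) = T1 (j + 1) ∧ S2 j = T2 j ∧ S2 j = S1 (j + 1) then
        ((1 + 1 : K) ^ (∑ j : Fin d, n j))
      else 0 := by
  -- The two conditions agree definitionally but carry different decidability instances.
  exact (stmt_5_general (Equiv.addRight 1) n S1 T1 S2 T2 h1 h2).trans (ite_cond_congr rfl)
end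

section
/- Let K be a commutative ring, d ≥ 1, and for j = 0,…,d−1 let n_j be a natural number and A_j ∈ K^{n_j × n_{j+1 mod d}}. Let k be a natural number with k ≤ n_j for all j, and for each j let S_j be a subset of {1,…,n_j} of size k. Then ∑_{P_0 ∈ 𝒫_{n_0}} ⋯ ∑_{P_{d−1} ∈ 𝒫_{n_{d−1}}} ∏_{j=0}^{d−1} [P_j A_j P_{j+1 mod d}^{-1}]_{S_j, S_{j+1 mod d}} = (∏_{j=0}^{d−1} k!·(n_j−k)!) · [A_0 A_1 ⋯ A_{d−1}]^{(k)}, where the factorials are cast into K. -/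
open scoped Fin.CommRing

/-- Reindex the rows of a matrix along an equality of dimensions. -/
def rowCast {K : Type} [CommRing K] {a b p : ℕ} (h : a = b) (M : Matrix (Fin a) (Fin p) K) :
    Matrix (Fin b) (Fin p) K :=
  M.submatrix (Fin.cast h.symm) id

/-- Reindex the columns of a matrix along an equality of dimensions. -/
def colCast {K : Type} [CommRing K] {m a b : ℕ} (h : a = b) (M : Matrix (Fin m) (Fin a) K) :
    Matrix (Fin m) (Fin b) K :=
  M.submatrix id (Fin.cast h.symm)

/-- Partial products `A_0 * A_1 * ⋯ * A_{m-1}` of a cyclic family of matrices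
`A j : Matrix (Fin (n j)) (Fin (n (j+1))) K` for `j : Fin d`. -/
def cycProdAux {K : Type} [CommRing K] {d : ℕ} [NeZero d] {n : Fin d → ℕ}
    (A : ∀ j : Fin d, Matrix (Fin (n j)) (Fin (n (j + 1))) K) :
    (m : ℕ) → Matrix (Fin (n 0)) (Fin (n (m : Fin d))) K
  | 0 => colCast (congrArg n (by simp)) (1 : Matrix (Fin (n 0)) (Fin (n 0)) K)
  | m + 1 => colCast (congrArg n (by push_cast; ring))
      (cycProdAux A m * A ((m : ℕ) : Fin d))

/-- The cyclic product `A_0 * A_1 * ⋯ * A_{d-1}`, an `n 0 × n 0` matrix. -/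
def cycProd {K : Type} [CommRing K] {d : ℕ} [NeZero d] {n : Fin d → ℕ}
    (A : ∀ j : Fin d, Matrix (Fin (n j)) (Fin (n (j + 1))) K) :
    Matrix (Fin (n 0)) (Fin (n 0)) K :=
  colCast (congrArg n (by simp)) (cycProdAux A d)

/-- `[A]^{(k)}`: the sum of all principal `k × k` minors of `A`. -/
def minorSum {K : Type} [CommRing K] {m : ℕ} (A : Matrix (Fin m) (Fin m) K) (k : ℕ) : K :=
  ∑ S ∈ Finset.powersetCard k (Finset.univ : Finset (Fin m)), minorDet A S S

/-!
Conjugating by permutation matrices replaces the minor of `A j` on `(S j, S (j + 1))` by the minor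
on the permuted tuples of indices, and as `π j` varies, every injective `k`-tuple in `Fin (n j)` is
hit `(n j - k)!` times. Minors on non-injective tuples vanish, so the left-hand side is
`∏ j, (n j - k)!` times a sum over all cycles of tuples, which is the trace of the product of the
compound matrices indexed by tuples. By Cauchy–Binet each multiplication of compounds costs a factor
`k!`, and the trace of the last compound is `k!` times the sum of the principal minors: `k! ^ d` in
total.
-/

section TupleCompound

variable {R : Type*} [CommRing R] {m p q ι : Type*} [Fintype ι] [DecidableEq ι]

/-- The `ι`-th compound of a matrix, with rows and columns indexed by all `ι`-tuples of indices
rather than by subsets: every minor of order `card ι` occurs once for each ordering, with the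
corresponding sign, and non-injective tuples contribute zero. -/
def tupleCompound (ι : Type*) [Fintype ι] [DecidableEq ι] (A : Matrix m p R) :
    Matrix (ι → m) (ι → p) R :=
  .of fun f g => (A.submatrix f g).det

theorem tupleCompound_apply (A : Matrix m p R) (f : ι → m) (g : ι → p) :
    tupleCompound ι A f g = (A.submatrix f g).det :=
  rfl

theorem tupleCompound_comp_perm_right (A : Matrix m p R) (f : ι → m) (g : ι → p)
    (σ : Equiv.Perm ι) :
    tupleCompound ι A f (g ∘ σ) = ((σ.sign : ℤ) : R) * tupleCompound ι A f g :=
  Matrix.det_permute' σ (A.submatrix f g)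

theorem tupleCompound_comp_perm (A : Matrix m p R) (f : ι → m) (g : ι → p)
    (σ : Equiv.Perm ι) :
    tupleCompound ι A (f ∘ σ) (g ∘ σ) = tupleCompound ι A f g :=
  Matrix.det_submatrix_equiv_self σ (A.submatrix f g)

theorem tupleCompound_eq_zero_of_not_injective (A : Matrix m p R) {f : ι → m} (g : ι → p)
    (hf : ¬ Function.Injective f) : tupleCompound ι A f g = 0 := by
  obtain ⟨i, j, hij, hne⟩ := Function.not_injective_iff.1 hf
  exact Matrix.det_zero_of_row_eq hne (funext fun x => by simp [hij])

theorem tupleCompound_mul_apply [Fintype p] (A : Matrix m p R) (B : Matrix p q R)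
    (f : ι → m) (h : ι → q) :
    tupleCompound ι (A * B) f h = ∑ g : ι → p, tupleCompound ι A f g * ∏ i, B (g i) (h i) := by
  simp only [tupleCompound_apply, Matrix.det_apply', Matrix.submatrix_apply, Matrix.mul_apply,
    Finset.prod_univ_sum, Fintype.piFinset_univ, Finset.mul_sum, Finset.sum_mul,
    Finset.prod_mul_distrib]
  rw [Finset.sum_comm]
  simp only [mul_assoc]

/-- The Cauchy–Binet formula. The factorial counts the orderings of each set of middle indices. -/
theorem tupleCompound_mul [Fintype p] (A : Matrix m p R) (B : Matrix p q R) :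
    tupleCompound ι A * tupleCompound ι B =
      (Fintype.card ι).factorial • tupleCompound ι (A * B) := by
  ext f h
  have expand_right (g : ι → p) : tupleCompound ι A f g * tupleCompound ι B g h =
      ∑ σ : Equiv.Perm ι, tupleCompound ι A f (g ∘ σ) * ∏ i, B ((g ∘ σ) i) (h i) := by
    simp only [tupleCompound_comp_perm_right, tupleCompound_apply B, Matrix.det_apply',
      Finset.mul_sum, Matrix.submatrix_apply, Function.comp_apply]
    exact Finset.sum_congr rfl fun σ _ => by ring
  have reindex (σ : Equiv.Perm ι) :
      ∑ g : ι → p, tupleCompound ι A f (g ∘ σ) * ∏ i, B ((g ∘ σ) i) (h i) =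
        tupleCompound ι (A * B) f h := by
    rw [tupleCompound_mul_apply]
    exact Fintype.sum_equiv (σ.symm.arrowCongr (.refl p)) _ _ fun _ => rfl
  rw [Matrix.mul_apply, Finset.sum_congr rfl fun g _ => expand_right g, Finset.sum_comm,
    Finset.sum_congr rfl fun σ _ => reindex σ, Finset.sum_const, Finset.card_univ,
    Fintype.card_perm, Matrix.smul_apply]

end TupleCompound

section PrincipalMinors

theorem image_univ_eq_iff_exists_orderEmbOfFin_comp_perm {α : Type*} [LinearOrder α] {k : ℕ}
    {S : Finset α} (hS : S.card = k) (f : Fin k → α) :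
    Finset.univ.image f = S ↔ ∃ σ : Equiv.Perm (Fin k), S.orderEmbOfFin hS ∘ σ = f := by
  constructor
  · intro hf
    have mem (i : Fin k) : f i ∈ S := hf ▸ Finset.mem_image_of_mem f (Finset.mem_univ i)
    have f_injective : Function.Injective f := by
      rw [← Set.injOn_univ, ← Finset.coe_univ, ← Finset.card_image_iff, hf, hS, Finset.card_fin]
    let σ (i : Fin k) : Fin k := (S.orderIsoOfFin hS).symm ⟨f i, mem i⟩
    have σ_injective : Function.Injective σ := fun i j hij => f_injective <| by simpa [σ] using hij
    refine ⟨.ofBijective σ (Finite.injective_iff_bijective.1 σ_injective), ?_⟩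
    ext i
    simp [σ, ← Finset.coe_orderIsoOfFin_apply]
  · rintro ⟨σ, rfl⟩
    rw [← Finset.image_image, Finset.image_univ_equiv, Finset.image_orderEmbOfFin_univ]

theorem sum_tuple_eq_factorial_nsmul_sum_powersetCard {α M : Type*} [LinearOrder α] [Fintype α]
    [AddCommMonoid M] {k : ℕ} (F : (Fin k → α) → M)
    (F_comp_perm : ∀ f (σ : Equiv.Perm (Fin k)), F (f ∘ σ) = F f)
    (F_eq_zero : ∀ f, ¬ Function.Injective f → F f = 0) (G : Finset α → M)
    (hG : ∀ S (hS : S.card = k), F (S.orderEmbOfFin hS) = G S) :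
    ∑ f, F f = k.factorial • ∑ S ∈ Finset.powersetCard k Finset.univ, G S := by
  have sum_image_eq {S : Finset α} (hS : S.card = k) :
      ∑ f with Finset.univ.image f = S, F f = k.factorial • G S := by
    have fiber_eq : ({f | Finset.univ.image f = S} : Finset (Fin k → α)) =
        Finset.univ.image fun σ : Equiv.Perm (Fin k) => S.orderEmbOfFin hS ∘ σ := by
      ext f
      simp [image_univ_eq_iff_exists_orderEmbOfFin_comp_perm hS]
    have comp_injective : Function.Injective
        fun σ : Equiv.Perm (Fin k) => S.orderEmbOfFin hS ∘ σ :=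
      (S.orderEmbOfFin hS).injective.comp_left.comp DFunLike.coe_injective
    rw [fiber_eq, Finset.sum_image comp_injective.injOn]
    simp [F_comp_perm, hG S hS, Fintype.card_perm]
  have sum_image_eq_zero {S : Finset α} (hS : S.card ≠ k) :
      ∑ f with Finset.univ.image f = S, F f = 0 := by
    refine Finset.sum_eq_zero fun f hf => F_eq_zero f fun f_injective => hS ?_
    rw [← (Finset.mem_filter.1 hf).2, Finset.card_image_of_injective _ f_injective]
    simp
  rw [← Finset.sum_fiberwise _ (fun f => Finset.univ.image f), Finset.smul_sum,
    ← Finset.sum_subset (Finset.subset_univ (Finset.powersetCard k Finset.univ))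
      fun S _ hS => sum_image_eq_zero (by simpa [Finset.mem_powersetCard] using hS)]
  exact Finset.sum_congr rfl fun S hS => sum_image_eq (Finset.mem_powersetCard.1 hS).2

theorem minorDet_eq_tupleCompound {K : Type} [CommRing K] {m p k : ℕ}
    (A : Matrix (Fin m) (Fin p) K) {S : Finset (Fin m)} {T : Finset (Fin p)}
    (hS : S.card = k) (hT : T.card = k) :
    minorDet A S T = tupleCompound (Fin k) A (S.orderEmbOfFin hS) (T.orderEmbOfFin hT) := by
  subst hS
  rw [minorDet, dif_pos hT, tupleCompound_apply]

theorem trace_tupleCompound_eq_factorial_nsmul_minorSum {K : Type} [CommRing K] {m : ℕ}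
    (A : Matrix (Fin m) (Fin m) K) (k : ℕ) :
    (tupleCompound (Fin k) A).trace = k.factorial • minorSum A k :=
  sum_tuple_eq_factorial_nsmul_sum_powersetCard (fun f => tupleCompound (Fin k) A f f)
    (fun f => tupleCompound_comp_perm A f f)
    (fun f => tupleCompound_eq_zero_of_not_injective A f) _
    fun _ hS => (minorDet_eq_tupleCompound A hS hS).symm

end PrincipalMinors

section PermutationSums

variable {ι : Type*} [Fintype ι]

theorem card_perm_comp_eq_s6 {α : Type*} [Fintype α] [DecidableEq α] {s f : ι → α}
    (hs : Function.Injective s) (hf : Function.Injective f) :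
    Fintype.card {π : Equiv.Perm α // π ∘ s = f} =
      (Fintype.card α - Fintype.card ι).factorial := by
  classical
  let e : Set.range s ≃ Set.range f :=
    (Equiv.ofInjective s hs).symm.trans (Equiv.ofInjective f hf)
  have comp_eq_iff (π : Equiv.Perm α) : π ∘ s = f ↔ ∀ x : Set.range s, π x = e x := by
    simp only [e, funext_iff, Function.comp_apply, Set.forall_subtype_range_iff,
      Equiv.trans_apply, Equiv.ofInjective_symm_apply, Equiv.ofInjective_apply]
  have card_compl_range {g : ι → α} (hg : Function.Injective g) :
      Fintype.card ↥(Set.range g)ᶜ = Fintype.card α - Fintype.card ι := by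
    rw [Fintype.card_compl_set, Set.card_range_of_injective hg]
  have compl_equiv : ↥(Set.range s)ᶜ ≃ ↥(Set.range f)ᶜ :=
    Fintype.equivOfCardEq ((card_compl_range hs).trans (card_compl_range hf).symm)
  rw [Fintype.card_congr ((Equiv.subtypeEquivRight comp_eq_iff).trans (Equiv.Set.compl e)),
    Fintype.card_equiv compl_equiv, card_compl_range hs]

theorem sum_perm_comp_eq_nsmul_sum {J M : Type*} [Fintype J] [DecidableEq J] [DecidableEq ι]
    [AddCommMonoid M] {X : J → Type*} [∀ j, Fintype (X j)] [∀ j, DecidableEq (X j)]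
    (s : ∀ j, ι → X j) (hs : ∀ j, Function.Injective (s j)) (F : (∀ j, ι → X j) → M)
    (F_eq_zero : ∀ f j, ¬ Function.Injective (f j) → F f = 0) :
    ∑ π : ∀ j, Equiv.Perm (X j), F (fun j => π j ∘ s j) =
      (∏ j, (Fintype.card (X j) - Fintype.card ι).factorial) • ∑ f, F f := by
  have card_fiber (f : ∀ j, ι → X j) (hf : ∀ j, Function.Injective (f j)) :
      Finset.card {π : ∀ j, Equiv.Perm (X j) | (fun j => π j ∘ s j) = f} =
        ∏ j, (Fintype.card (X j) - Fintype.card ι).factorial := by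
    simp only [← fun j => card_perm_comp_eq_s6 (hs j) (hf j), ← Fintype.card_pi,
      ← Fintype.card_subtype, funext_iff (g := f)]
    exact Fintype.card_congr
      (Equiv.subtypePiEquivPi (p := fun j (π : Equiv.Perm (X j)) => π ∘ s j = f j))
  rw [← Finset.sum_fiberwise _ fun (π : ∀ j, Equiv.Perm (X j)) j => π j ∘ s j, Finset.smul_sum]
  refine Finset.sum_congr rfl fun f _ => ?_
  rw [Finset.sum_congr rfl fun π hπ => congrArg F (Finset.mem_filter.1 hπ).2, Finset.sum_const]
  by_cases hf : ∀ j, Function.Injective (f j)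
  · rw [card_fiber f hf]
  · obtain ⟨j, hj⟩ := not_forall.1 hf
    simp only [F_eq_zero f j hj, smul_zero]

theorem minorDet_permMatrix_mul_mul_inv {K : Type} [CommRing K] {m p k : ℕ}
    (A : Matrix (Fin m) (Fin p) K) (π : Equiv.Perm (Fin m)) (ρ : Equiv.Perm (Fin p))
    {S : Finset (Fin m)} {T : Finset (Fin p)} (hS : S.card = k) (hT : T.card = k) :
    minorDet (π.permMatrix K * A * (ρ.permMatrix K)⁻¹) S T =
      tupleCompound (Fin k) A (π ∘ S.orderEmbOfFin hS) (ρ ∘ T.orderEmbOfFin hT) := by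
  have inv_permMatrix : (ρ.permMatrix K)⁻¹ = (ρ⁻¹).permMatrix K :=
    Matrix.inv_eq_left_inv (by rw [← Matrix.permMatrix_mul, mul_inv_cancel, Matrix.permMatrix_one])
  have conj_eq : π.permMatrix K * A * (ρ.permMatrix K)⁻¹ = A.submatrix π ρ := by
    rw [inv_permMatrix, PEquiv.toMatrix_toPEquiv_mul, PEquiv.mul_toMatrix_toPEquiv,
      Matrix.submatrix_submatrix]
    rfl
  rw [conj_eq, minorDet_eq_tupleCompound _ hS hT]
  rfl

end PermutationSums

section ChainProducts

variable {R : Type*} {X : ℕ → Type*}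

theorem prod_path_snoc [CommMonoid R] (w : ∀ i, X i → X (i + 1) → R) {e : ℕ}
    (f : ∀ j : Fin (e + 1), X j) (b : X (e + 1)) :
    ∏ j : Fin (e + 1), w j (Fin.snoc (α := fun i : Fin (e + 2) => X i) f b j.castSucc)
        (Fin.snoc (α := fun i : Fin (e + 2) => X i) f b j.succ) =
      (∏ j : Fin e, w j (f j.castSucc) (f j.succ)) * w e (f (Fin.last e)) b := by
  let Y (i : Fin (e + 2)) : Type _ := X i
  rw [Fin.prod_univ_castSucc]
  refine congrArg₂ (· * ·) (Finset.prod_congr rfl fun j _ => ?_) ?_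
  · exact congrArg₂ (w j) (Fin.snoc_castSucc (α := Y) b f j.castSucc)
      (Fin.snoc_castSucc (α := Y) b f j.succ)
  · exact congrArg₂ (w e) (Fin.snoc_castSucc (α := Y) b f (Fin.last e))
      (Fin.snoc_last (α := Y) b f)

variable [∀ i, Fintype (X i)] [DecidableEq (X 0)]

/-- The product `M 0 * ⋯ * M (i - 1)` of a sequence of composable rectangular matrices. -/
def chainProd [Semiring R] (M : ∀ i, Matrix (X i) (X (i + 1)) R) : ∀ i, Matrix (X 0) (X i) R
  | 0 => 1
  | i + 1 => chainProd M i * M i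

theorem sum_prod_path_eq_trace_chainProd_mul [CommSemiring R]
    (M : ∀ i, Matrix (X i) (X (i + 1)) R) (e : ℕ) (L : Matrix (X e) (X 0) R) :
    ∑ f : ∀ j : Fin (e + 1), X j,
        (∏ j : Fin e, M j (f j.castSucc) (f j.succ)) * L (f (Fin.last e)) (f 0) =
      (chainProd M e * L).trace := by
  induction e with
  | zero =>
    rw [chainProd, Matrix.one_mul]
    simp only [Finset.univ_eq_empty, Finset.prod_empty, one_mul]
    exact Fintype.sum_equiv (Equiv.piUnique fun j : Fin 1 => X j) _ _ fun _ => rfl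
  | succ e ih =>
    let Y (i : Fin (e + 2)) : Type _ := X i
    have closing_snoc (f : ∀ j : Fin (e + 1), X j) (b : X (e + 1)) :
        L (Fin.snoc (α := Y) f b (Fin.last (e + 1))) (Fin.snoc (α := Y) f b 0) = L b (f 0) :=
      congrArg₂ L (Fin.snoc_last (α := Y) b f) (Fin.snoc_castSucc (α := Y) b f 0)
    calc
      _ = ∑ f : ∀ j : Fin (e + 1), X j, ∑ b : X (e + 1),
          (∏ j : Fin e, M j (f j.castSucc) (f j.succ)) * M e (f (Fin.last e)) b * L b (f 0) := by
        rw [← (Fin.snocEquiv Y).sum_comp, Fintype.sum_prod_type_right]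
        exact Finset.sum_congr rfl fun f _ => Finset.sum_congr rfl fun b _ =>
          congrArg₂ (· * ·) (prod_path_snoc M f b) (closing_snoc f b)
      _ = ∑ f : ∀ j : Fin (e + 1), X j,
          (∏ j : Fin e, M j (f j.castSucc) (f j.succ)) * (M e * L) (f (Fin.last e)) (f 0) :=
        Finset.sum_congr rfl fun f _ => by
          simp only [mul_assoc, ← Finset.mul_sum]
          rfl
      _ = (chainProd M (e + 1) * L).trace := by
        rw [ih, ← Matrix.mul_assoc, chainProd]

theorem chainProd_tupleCompound [CommRing R] (ι : Type*) [Fintype ι] [DecidableEq ι]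
    (M : ∀ i, Matrix (X i) (X (i + 1)) R) (e : ℕ) :
    chainProd (fun i => tupleCompound ι (M i)) (e + 1) =
      (Fintype.card ι).factorial ^ e • tupleCompound ι (chainProd M (e + 1)) := by
  induction e with
  | zero => simp [chainProd]
  | succ e ih =>
    rw [chainProd, ih, Matrix.smul_mul, tupleCompound_mul, smul_smul, ← pow_succ]
    rfl

end ChainProducts

section CyclicProducts

theorem cast_apply_eq_apply {α : Type*} {Y : α → Type*} (f : ∀ a, Y a) {a b : α} (h : a = b) :
    cast (congrArg Y h) (f a) = f b := by
  subst h
  rfl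

theorem cast_arrow_eq_cast_comp {α ι : Type*} {Y : α → Type*} {a b : α} (h : a = b) (f : ι → Y a) :
    cast (congrArg (fun a => ι → Y a) h) f = cast (congrArg Y h) ∘ f := by
  subst h
  rfl

variable {R : Type*} {d : ℕ} [NeZero d] {X : Fin d → Type*}

/-- The `d`-periodic sequence `M 0, M 1, …, M (d - 1), M 0, …` of a cyclic family of composable
matrices. The types `X (i + 1 : Fin d)` and `X ((i + 1 : ℕ) : Fin d)` are only propositionally
equal, hence the cast of the column indices. -/
def unrollCycle (M : ∀ j, Matrix (X j) (X (j + 1)) R) (i : ℕ) :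
    Matrix (X (i : Fin d)) (X ((i + 1 : ℕ) : Fin d)) R :=
  (M i).submatrix id (cast (congrArg X (Nat.cast_succ i)))

theorem unrollCycle_apply_section (M : ∀ j, Matrix (X j) (X (j + 1)) R) (f : ∀ j, X j) (i : ℕ) :
    unrollCycle M i (f i) (f (i + 1 : ℕ)) = M i (f i) (f (i + 1)) :=
  congrArg (M i (f i)) (cast_apply_eq_apply f (Nat.cast_succ i))

theorem unrollCycle_tupleCompound [CommRing R] (ι : Type*) [Fintype ι] [DecidableEq ι]
    (M : ∀ j, Matrix (X j) (X (j + 1)) R) (i : ℕ) :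
    unrollCycle (fun j => tupleCompound ι (M j)) i = tupleCompound ι (unrollCycle M i) := by
  ext f g
  exact congrArg (tupleCompound ι (M i) f) (cast_arrow_eq_cast_comp (Nat.cast_succ i) g)

variable [∀ j, Fintype (X j)] [∀ j, DecidableEq (X j)]

/-- The cyclic product `M 0 * ⋯ * M (d - 1)`. It extends `cycProd` from `Fin (n j)` to arbitrary
finite index types, so that it also applies to families of compound matrices. -/
def cyclicProd [Semiring R] (M : ∀ j, Matrix (X j) (X (j + 1)) R) : Matrix (X 0) (X 0) R :=
  (chainProd (X := fun i : ℕ => X i) (unrollCycle M) d).submatrix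
    (cast (congrArg X Nat.cast_zero.symm)) (cast (congrArg X (Fin.natCast_self d).symm))

theorem sum_prod_cycle_eq_trace_cyclicProd [CommSemiring R]
    (M : ∀ j, Matrix (X j) (X (j + 1)) R) :
    ∑ f : ∀ j, X j, ∏ j, M j (f j) (f (j + 1)) = (cyclicProd M).trace := by
  obtain ⟨e, rfl⟩ := Nat.exists_eq_succ_of_ne_zero (NeZero.ne d)
  let L : Matrix (X (e : Fin (e + 1))) (X ((0 : ℕ) : Fin (e + 1))) R :=
    (unrollCycle M e).submatrix id (cast (congrArg X (Fin.natCast_self (e + 1)).symm))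
  have L_apply (f : ∀ j, X j) : L (f e) (f (0 : ℕ)) = unrollCycle M e (f e) (f (e + 1 : ℕ)) :=
    congrArg (unrollCycle M e (f e)) (cast_apply_eq_apply f (Fin.natCast_self (e + 1)).symm)
  have prod_cycle_eq (f : ∀ j, X j) : ∏ j, M j (f j) (f (j + 1)) =
      (∏ j : Fin e, unrollCycle M j (f (j : ℕ)) (f (j + 1 : ℕ))) * L (f e) (f (0 : ℕ)) := by
    have prod_natCast : ∏ j, M j (f j) (f (j + 1)) =
        ∏ j : Fin (e + 1), M (j : ℕ) (f (j : ℕ)) (f ((j : ℕ) + 1)) :=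
      Finset.prod_congr rfl fun j _ =>
        congrArg (fun i => M i (f i) (f (i + 1))) (Fin.cast_val_eq_self j).symm
    rw [prod_natCast, L_apply, Fin.prod_univ_castSucc]
    simp only [unrollCycle_apply_section, Fin.val_castSucc, Fin.val_last]
  let natCastVal : Fin (e + 1) ≃ Fin (e + 1) :=
    ⟨id, fun j => ((j : ℕ) : Fin (e + 1)), Fin.cast_val_eq_self, Fin.cast_val_eq_self⟩
  calc
    _ = ∑ f : ∀ j : Fin (e + 1), X ((j : ℕ) : Fin (e + 1)),
        (∏ j : Fin e, unrollCycle M j (f j.castSucc) (f j.succ)) * L (f (Fin.last e)) (f 0) :=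
      Fintype.sum_equiv (Equiv.piCongrLeft' X natCastVal) _ _ prod_cycle_eq
    _ = (chainProd (X := fun i : ℕ => X i) (unrollCycle M) e * L).trace :=
      sum_prod_path_eq_trace_chainProd_mul (X := fun i : ℕ => X i) (unrollCycle M) e L
    _ = (cyclicProd M).trace := rfl

theorem cyclicProd_tupleCompound [CommRing R] (ι : Type*) [Fintype ι] [DecidableEq ι]
    (M : ∀ j, Matrix (X j) (X (j + 1)) R) :
    cyclicProd (fun j => tupleCompound ι (M j)) =
      (Fintype.card ι).factorial ^ (d - 1) • tupleCompound ι (cyclicProd M) := by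
  have chainProd_eq : chainProd (X := fun i : ℕ => ι → X i)
        (unrollCycle fun j => tupleCompound ι (M j)) d =
      (Fintype.card ι).factorial ^ (d - 1) •
        tupleCompound ι (chainProd (X := fun i : ℕ => X i) (unrollCycle M) d) := by
    obtain ⟨e, rfl⟩ := Nat.exists_eq_succ_of_ne_zero (NeZero.ne d)
    rw [funext (unrollCycle_tupleCompound ι M)]
    exact chainProd_tupleCompound (X := fun i : ℕ => X i) ι (unrollCycle M) e
  ext f g
  rw [cyclicProd, chainProd_eq]
  exact congrArg₂
    (fun u v => (Fintype.card ι).factorial ^ (d - 1) •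
      tupleCompound ι (chainProd (X := fun i : ℕ => X i) (unrollCycle M) d) u v)
    (cast_arrow_eq_cast_comp Nat.cast_zero.symm f)
    (cast_arrow_eq_cast_comp (Fin.natCast_self d).symm g)

theorem cycProd_eq_cyclicProd {K : Type} [CommRing K] {n : Fin d → ℕ}
    (A : ∀ j : Fin d, Matrix (Fin (n j)) (Fin (n (j + 1))) K) :
    cycProd A = cyclicProd (X := fun j => Fin (n j)) A := by
  have cycProdAux_eq (i : ℕ) : cycProdAux A i =
      rowCast (congrArg n Nat.cast_zero)
        (chainProd (X := fun i : ℕ => Fin (n i)) (unrollCycle (X := fun j => Fin (n j)) A) i) := by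
    induction i with
    | zero => rfl
    | succ i ih =>
      rw [cycProdAux, ih, chainProd, unrollCycle, ← Fin.cast_eq_cast]
      rfl
  rw [cycProd, cycProdAux_eq, cyclicProd,
    ← Fin.cast_eq_cast (congrArg n Nat.cast_zero.symm),
    ← Fin.cast_eq_cast (congrArg n (Fin.natCast_self d).symm)]
  rfl

end CyclicProducts

theorem stmt_6 {K : Type} [CommRing K] (d : ℕ) [NeZero d] (n : Fin d → ℕ)
    (A : ∀ j : Fin d, Matrix (Fin (n j)) (Fin (n (j + 1))) K)
    (k : ℕ) (hk : ∀ j, k ≤ n j)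
    (S : ∀ j : Fin d, Finset (Fin (n j))) (hS : ∀ j, (S j).card = k) :
    ∑ π : (∀ j : Fin d, Equiv.Perm (Fin (n j))),
        ∏ j : Fin d,
          minorDet ((π j).permMatrix K * A j * ((π (j + 1)).permMatrix K)⁻¹) (S j) (S (j + 1)) =
      ((∏ j : Fin d, k.factorial * (n j - k).factorial : ℕ) : K) * minorSum (cycProd A) k := by
  let F (f : ∀ j, Fin k → Fin (n j)) : K := ∏ j, tupleCompound (Fin k) (A j) (f j) (f (j + 1))
  let s (j : Fin d) : Fin k → Fin (n j) := (S j).orderEmbOfFin (hS j)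
  have F_eq_zero (f : ∀ j, Fin k → Fin (n j)) (j : Fin d) (hf : ¬ Function.Injective (f j)) :
      F f = 0 :=
    Finset.prod_eq_zero (Finset.mem_univ j) (tupleCompound_eq_zero_of_not_injective _ _ hf)
  have sum_F : ∑ f, F f = k.factorial ^ d • minorSum (cycProd A) k := by
    rw [sum_prod_cycle_eq_trace_cyclicProd (X := fun j => Fin k → Fin (n j)),
      cyclicProd_tupleCompound (X := fun j => Fin (n j)), ← cycProd_eq_cyclicProd,
      Matrix.trace_smul, trace_tupleCompound_eq_factorial_nsmul_minorSum, smul_smul,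
      Fintype.card_fin, pow_sub_one_mul (NeZero.ne d)]
  calc
    _ = ∑ π : ∀ j, Equiv.Perm (Fin (n j)), F (fun j => π j ∘ s j) := by
      simp only [minorDet_permMatrix_mul_mul_inv _ _ _ (hS _) (hS _)]
      rfl
    _ = (∏ j, (n j - k).factorial) • ∑ f, F f := by
      simpa only [Fintype.card_fin] using sum_perm_comp_eq_nsmul_sum s
        (fun j => ((S j).orderEmbOfFin (hS j)).injective) F F_eq_zero
    _ = _ := by
      rw [sum_F, smul_smul, nsmul_eq_mul, Finset.prod_mul_distrib, Finset.prod_const,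
        Finset.card_fin, mul_comm (k.factorial ^ d)]
end

section
/- Let K be a commutative ring, n and k natural numbers with k ≤ n, and let S, T, U, V be subsets of {1,…,n} each of size k. If |S ∩ V| ≠ |T ∩ U|, then ∑_{P ∈ 𝒫_n} [P]_{S,T}·[P^{-1}]_{U,V} = 0. -/
/-!
The sum vanishes term by term. A nonzero minor `[P_π]_{S,T}` has no zero row, so `π` maps `S` into
`T`, hence onto `T` as the cardinalities agree. If both factors of a term were nonzero, then
`π S = T` and `π⁻¹ U = V`, so `π` would map `S ∩ V` bijectively onto `T ∩ U`.
-/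

open scoped Pointwise

section

variable {K : Type} [CommRing K]

theorem minorDet_eq_zero_of_row_eq_zero_s10 {m p : ℕ} {A : Matrix (Fin m) (Fin p) K}
    {S : Finset (Fin m)} {T : Finset (Fin p)} {i : Fin m}
    (hi : i ∈ S) (hrow : ∀ j ∈ T, A i j = 0) : minorDet A S T = 0 := by
  unfold minorDet
  split_ifs with hcard
  · obtain ⟨r, rfl⟩ : i ∈ Set.range (S.orderEmbOfFin rfl) := by rwa [S.range_orderEmbOfFin rfl]
    exact Matrix.det_eq_zero_of_row_eq_zero r fun c => hrow _ (T.orderEmbOfFin_mem hcard c)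
  · rfl

theorem smul_finset_eq_of_minorDet_permMatrix_ne_zero {n : ℕ} {π : Equiv.Perm (Fin n)}
    {S T : Finset (Fin n)} (hcard : S.card = T.card)
    (hminor : minorDet (π.permMatrix K) S T ≠ 0) : π • S = T := by
  have hmaps : ∀ s ∈ S, π s ∈ T := by
    intro s hs
    by_contra hsT
    refine hminor (minorDet_eq_zero_of_row_eq_zero_s10 hs fun t ht => ?_)
    have hst : π s ≠ t := fun h => hsT (h ▸ ht)
    rw [Equiv.Perm.permMatrix, PEquiv.toMatrix_toPEquiv_apply, Pi.single_eq_of_ne' hst]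
  refine Finset.eq_of_subset_of_card_le (Finset.image_subset_iff.mpr hmaps) ?_
  rw [Finset.card_smul_finset, hcard]

theorem stmt_10_general {n : ℕ} {S T U V : Finset (Fin n)}
    (hST : S.card = T.card) (hUV : U.card = V.card) (hne : (S ∩ V).card ≠ (T ∩ U).card)
    (π : Equiv.Perm (Fin n)) :
    minorDet (π.permMatrix K) S T * minorDet ((π⁻¹).permMatrix K) U V = 0 := by
  by_contra hprod
  have hT : π • S = T :=
    smul_finset_eq_of_minorDet_permMatrix_ne_zero hST (left_ne_zero_of_mul hprod)
  have hV : π⁻¹ • U = V :=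
    smul_finset_eq_of_minorDet_permMatrix_ne_zero hUV (right_ne_zero_of_mul hprod)
  have hU : π • V = U := by rw [← hV, smul_inv_smul]
  refine hne ?_
  rw [← hT, ← hU, ← Finset.smul_finset_inter, Finset.card_smul_finset]

end

theorem stmt_10 {K : Type} [CommRing K] (n k : ℕ) (hkn : k ≤ n)
    (S T U V : Finset (Fin n))
    (hS : S.card = k) (hT : T.card = k) (hU : U.card = k) (hV : V.card = k)
    (hne : (S ∩ V).card ≠ (T ∩ U).card) :
    ∑ π : Equiv.Perm (Fin n),
        minorDet (π.permMatrix K) S T * minorDet ((π⁻¹).permMatrix K) U V = 0 :=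
  Finset.sum_eq_zero fun π _ => stmt_10_general (hS.trans hT.symm) (hU.trans hV.symm) hne π
end
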